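/- arXiv:1105.2549 — 3 statements merged into one kernel-verified Lean document; each statement's English description precedes it below -/
import Mathlib

section
/- Let j_1, j_2 ≥ 2 be integers, let k ≥ 1, and let σ_1, σ_2 be permutations of {1,…,k} with σ_1 ∘ σ_2 = (1,2,…,k) (the standard k-cycle). Suppose σ_2 has exactly two cycles c_1 and c_2, and that σ_1 has exactly j_1 + j_2 − 2 cycles. Then it is impossible that simultaneously the cycle c_1 intersects at most j_1 − 1 cycles of σ_1 and the cycle c_2 intersects at most j_2 − 1 cycles of σ_1. -/
/-- The set of cycles of a permutation `σ` of `{1,…,k}` (orbits, including fixed points),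
each cycle given as the `Finset` of its elements. -/
def cycles {k : ℕ} (σ : Equiv.Perm (Fin k)) : Finset (Finset (Fin k)) :=
  Finset.univ.image fun x => Finset.univ.filter fun y => σ.SameCycle x y

/-!
Let `σ₁` and `σ₂` generate a transitive group, and let `s` and `t` be nonempty sets covering the
whole space with `s` invariant under `σ₂`. Every cycle of `σ₁` meets `s` or `t`, so counting the
cycles meeting `s` and those meeting `t` counts each cycle at least once, and twice if it meets
both. If no cycle met both, `s` would be invariant under `σ₁` as well, so by transitivity it would
be everything, and then any cycle through a point of `t` would meet both after all.

For `s`, `t` the two cycles of `σ₂` this shows that the two numbers of `σ₁`-cycles met sum to at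
least `(j₁ + j₂ - 2) + 1`, whereas the bounds to be refuted allow only `(j₁ - 1) + (j₂ - 1)`.
-/

open Finset MulAction
open Equiv (Perm)

theorem card_filter_add_card_filter_of_forall_or {ι : Type*} {A : Finset ι}
    {p q : ι → Prop} [DecidablePred p] [DecidablePred q] (h : ∀ i ∈ A, p i ∨ q i) :
    #(A.filter p) + #(A.filter q) = #A + #(A.filter fun i => p i ∧ q i) := by
  classical
  rw [← card_union_add_card_inter, ← filter_or, ← filter_and, filter_true_of_mem h]

theorem sup_eq_of_card_parts_eq_two {L : Type*} [Lattice L] [OrderBot L] {a b c : L}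
    (P : Finpartition a) (hb : b ∈ P.parts) (hc : c ∈ P.parts) (hbc : b ≠ c)
    (hcard : #P.parts = 2) : b ⊔ c = a := by
  classical
  have hparts : {b, c} = P.parts :=
    eq_of_subset_of_card_le (by simp [insert_subset_iff, hb, hc]) (by rw [hcard, card_pair hbc])
  rw [← P.sup_parts, ← hparts, sup_insert, sup_singleton, id, id]

open scoped Pointwise in
theorem mem_of_smul_mem_of_isPretransitive_closure {G α : Type*} [Group G] [MulAction G α]
    {S : Set G} [IsPretransitive (Subgroup.closure S) α] {s : Finset α}
    (hs : s.Nonempty) (hS : ∀ g ∈ S, ∀ x ∈ s, g • x ∈ s) (y : α) : y ∈ s := by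
  classical
  have hle : Subgroup.closure S ≤ stabilizer G s :=
    (Subgroup.closure_le _).2 fun g hg => mem_stabilizer_finset'.2 (hS g hg)
  obtain ⟨x, hx⟩ := hs
  obtain ⟨g, rfl⟩ := exists_smul_eq (Subgroup.closure S) x y
  exact mem_stabilizer_finset'.1 (hle g.2) hx

theorem isPretransitive_closure_pair_of_sameCycle_mul {α : Type*} {f g : Perm α}
    (h : ∀ x y, (f * g).SameCycle x y) : IsPretransitive (Subgroup.closure {f, g}) α where
  exists_smul_eq x y := by
    have hfg : f * g ∈ Subgroup.closure {f, g} :=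
      mul_mem (Subgroup.subset_closure (by simp)) (Subgroup.subset_closure (by simp))
    obtain ⟨i, hi⟩ := h x y
    exact ⟨⟨(f * g) ^ i, zpow_mem hfg i⟩, hi⟩

theorem sameCycle_finRotate : ∀ {n : ℕ} (x y : Fin n), (finRotate n).SameCycle x y
  | 0, x, _ => x.elim0
  | 1, x, y => Subsingleton.elim x y ▸ .refl _ x
  | n + 2, x, y =>
    isCycle_finRotate.sameCycle (Perm.mem_support.1 (by simp [support_finRotate]))
      (Perm.mem_support.1 (by simp [support_finRotate]))

section CyclePartition

instance decidableRelSameCycleSetoid {α : Type*} (σ : Perm α) [DecidableRel σ.SameCycle] :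
    DecidableRel (Perm.SameCycle.setoid σ) :=
  inferInstanceAs (DecidableRel σ.SameCycle)

variable {α : Type*} [Fintype α] [DecidableEq α]

/-- The partition of a finite type into the cycles of a permutation, fixed points being cycles of
length one. It extends `cycles`, its set of parts when the type is `Fin k`, to all finite types. -/
def cyclePartition (σ : Perm α) : Finpartition (univ : Finset α) :=
  .ofSetoid (Perm.SameCycle.setoid σ)

theorem parts_cyclePartition {k : ℕ} (σ : Perm (Fin k)) : (cyclePartition σ).parts = cycles σ :=
  rfl

theorem apply_mem_part_cyclePartition (σ : Perm α) (x : α) : σ x ∈ (cyclePartition σ).part x :=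
  Finpartition.mem_part_ofSetoid_iff_rel.2 (Perm.SameCycle.refl σ x).apply_right

theorem apply_mem_of_mem_parts_cyclePartition {σ : Perm α} {c : Finset α}
    (hc : c ∈ (cyclePartition σ).parts) {x : α} (hx : x ∈ c) : σ x ∈ c :=
  (cyclePartition σ).part_eq_of_mem hc hx ▸ apply_mem_part_cyclePartition σ x

theorem exists_cycle_inter_nonempty_of_isPretransitive {σ₁ σ₂ : Perm α}
    [IsPretransitive (Subgroup.closure {σ₁, σ₂}) α] {s t : Finset α} (hs : s.Nonempty)
    (ht : t.Nonempty) (hst : s ∪ t = univ) (hσ₂ : ∀ x ∈ s, σ₂ x ∈ s) :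
    ∃ b ∈ (cyclePartition σ₁).parts, (s ∩ b).Nonempty ∧ (t ∩ b).Nonempty := by
  suffices ∃ x ∈ s, ∃ y ∈ t, y ∈ (cyclePartition σ₁).part x by
    obtain ⟨x, hx, y, hy, hxy⟩ := this
    exact ⟨_, (cyclePartition σ₁).part_mem.2 (mem_univ x),
      ⟨x, mem_inter.2 ⟨hx, (cyclePartition σ₁).mem_part_self.2 (mem_univ x)⟩⟩,
      ⟨y, mem_inter.2 ⟨hy, hxy⟩⟩⟩
  by_cases hσ₁ : ∀ x ∈ s, σ₁ x ∈ s
  · have hmem_s : ∀ y, y ∈ s :=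
      mem_of_smul_mem_of_isPretransitive_closure (S := {σ₁, σ₂}) hs (by simpa using ⟨hσ₁, hσ₂⟩)
    obtain ⟨y, hy⟩ := ht
    exact ⟨y, hmem_s y, y, hy, (cyclePartition σ₁).mem_part_self.2 (mem_univ y)⟩
  · push Not at hσ₁
    obtain ⟨x, hx, hσx⟩ := hσ₁
    have hmem_t : σ₁ x ∈ t := (mem_union.1 (hst ▸ mem_univ (σ₁ x))).resolve_left hσx
    exact ⟨x, hx, σ₁ x, hmem_t, apply_mem_part_cyclePartition σ₁ x⟩

theorem inter_nonempty_or_of_union_eq_univ {s t b : Finset α} (hst : s ∪ t = univ)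
    (hb : b.Nonempty) : (s ∩ b).Nonempty ∨ (t ∩ b).Nonempty := by
  rwa [← union_nonempty, ← union_inter_distrib_right, hst, univ_inter]

theorem stmt_9_general {σ₁ σ₂ : Perm α} [IsPretransitive (Subgroup.closure {σ₁, σ₂}) α]
    {s t : Finset α} (hs : s.Nonempty) (ht : t.Nonempty) (hst : s ∪ t = univ)
    (hσ₂ : ∀ x ∈ s, σ₂ x ∈ s) :
    #(cyclePartition σ₁).parts <
      #((cyclePartition σ₁).parts.filter fun b => (s ∩ b).Nonempty) +
        #((cyclePartition σ₁).parts.filter fun b => (t ∩ b).Nonempty) := by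
  have hmeets : ∀ b ∈ (cyclePartition σ₁).parts, (s ∩ b).Nonempty ∨ (t ∩ b).Nonempty :=
    fun _ hb => inter_nonempty_or_of_union_eq_univ hst (Finpartition.nonempty_of_mem_parts _ hb)
  rw [card_filter_add_card_filter_of_forall_or hmeets, Nat.lt_add_right_iff_pos, card_pos,
    filter_nonempty_iff]
  exact exists_cycle_inter_nonempty_of_isPretransitive hs ht hst hσ₂

end CyclePartition

/-- let `j_1, j_2 ≥ 2`, `σ₁ σ₂ = (1,…,k)`, `σ₂` with exactly the two cycles
`c₁ ≠ c₂` and `σ₁` with exactly `j_1 + j_2 − 2` cycles.  Then it cannot happen that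
simultaneously `c₁` intersects at most `j_1 − 1` cycles of `σ₁` and `c₂` intersects at most
`j_2 − 1` cycles of `σ₁`. -/
theorem stmt_9 (k j₁ j₂ : ℕ) (hk : 1 ≤ k) (hj₁ : 2 ≤ j₁) (hj₂ : 2 ≤ j₂)
    (σ₁ σ₂ : Equiv.Perm (Fin k)) (hfact : σ₁ * σ₂ = finRotate k)
    (c₁ c₂ : Finset (Fin k)) (hc₁ : c₁ ∈ cycles σ₂) (hc₂ : c₂ ∈ cycles σ₂)
    (hne : c₁ ≠ c₂) (hcard₂ : (cycles σ₂).card = 2)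
    (hcard₁ : (cycles σ₁).card = j₁ + j₂ - 2) :
    ¬(((cycles σ₁).filter (fun b => (c₁ ∩ b).Nonempty)).card ≤ j₁ - 1 ∧
      ((cycles σ₁).filter (fun b => (c₂ ∩ b).Nonempty)).card ≤ j₂ - 1) := by
  rintro ⟨h₁, h₂⟩
  rw [← parts_cyclePartition] at hc₁ hc₂ hcard₁ hcard₂ h₁ h₂
  have : IsPretransitive (Subgroup.closure {σ₁, σ₂}) (Fin k) :=
    isPretransitive_closure_pair_of_sameCycle_mul (hfact ▸ sameCycle_finRotate)
  have hlt := stmt_9_general (σ₁ := σ₁) (σ₂ := σ₂)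
    (Finpartition.nonempty_of_mem_parts _ hc₁) (Finpartition.nonempty_of_mem_parts _ hc₂)
    (sup_eq_of_card_parts_eq_two _ hc₁ hc₂ hne hcard₂)
    fun _ => apply_mem_of_mem_parts_cyclePartition hc₁
  omega
end

section
/- Let k ≥ 1 be an integer and let σ_1, σ_2 be permutations of {1,…,k} with σ_1 ∘ σ_2 = (1,2,…,k) (the standard k-cycle). Then |C(σ_1)| + |C(σ_2)| ≤ k + 1, where |C(σ)| denotes the number of cycles of σ (orbits of σ on {1,…,k}, including fixed points). -/
/-!
The functions constant on the classes of an equivalence relation `r` form a vector space whose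
dimension is the number of classes of `r`, and such spaces for `r` and `s` intersect in the one for
`r ⊔ s`. The dimension formula therefore makes partitions semimodular:
`|α/r| + |α/s| ≤ |α| + |α/(r ⊔ s)|`. When `r` and `s` are the cycle relations of `σ` and `τ`, their
join contains the cycle relation of `σ * τ`, so `|α/(r ⊔ s)|` is at most the number of cycles of
`σ * τ`, which is one when `σ * τ` is a rotation of all of `α`.
-/

open Equiv Equiv.Perm

section Partitions

variable {α : Type*}

/-- The space of `K`-valued functions constant on each class of `r`, encoded as the functions that
factor through the quotient by `r`. -/
def classFunctions (K : Type*) [DivisionRing K] (r : Setoid α) : Submodule K (α → K) :=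
  LinearMap.range (LinearMap.funLeft K K (Quotient.mk r))

section DivisionRing

variable {K : Type*} [DivisionRing K]

theorem mem_classFunctions_iff {r : Setoid α} {f : α → K} :
    f ∈ classFunctions K r ↔ r ≤ Setoid.ker f := by
  constructor
  · rintro ⟨g, rfl⟩ x y hxy
    exact congrArg g (Quotient.sound hxy)
  · intro hf
    exact ⟨Quotient.lift f fun _ _ hxy => hf hxy, rfl⟩

theorem classFunctions_inf_classFunctions (r s : Setoid α) :
    classFunctions K r ⊓ classFunctions K s = classFunctions K (r ⊔ s) := by
  ext f
  simp only [Submodule.mem_inf, mem_classFunctions_iff, sup_le_iff]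

theorem finrank_classFunctions (r : Setoid α) [Finite (Quotient r)] :
    Module.finrank K (classFunctions K r) = Nat.card (Quotient r) := by
  have := Fintype.ofFinite (Quotient r)
  rw [classFunctions, LinearMap.finrank_range_of_inj
    (LinearMap.funLeft_injective_of_surjective K K _ Quotient.mk_surjective),
    Module.finrank_fintype_fun_eq_card, Nat.card_eq_fintype_card]

end DivisionRing

theorem card_quotient_le_of_le {r s : Setoid α} [Finite (Quotient r)] (h : r ≤ s) :
    Nat.card (Quotient s) ≤ Nat.card (Quotient r) :=
  Nat.card_le_card_of_surjective (Quotient.map id h)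
    (Quotient.mk_surjective.of_comp (g := Quotient.mk r))

theorem card_quotient_add_card_quotient_le [Finite α] (r s : Setoid α) :
    Nat.card (Quotient r) + Nat.card (Quotient s) ≤
      Nat.card α + Nat.card (Quotient (r ⊔ s)) := by
  have := Fintype.ofFinite α
  let V := classFunctions ℚ r
  let W := classFunctions ℚ s
  calc
    Nat.card (Quotient r) + Nat.card (Quotient s) = Module.finrank ℚ V + Module.finrank ℚ W := by
      rw [finrank_classFunctions, finrank_classFunctions]
    _ = Module.finrank ℚ ↥(V ⊔ W) + Module.finrank ℚ ↥(V ⊓ W) :=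
      (Submodule.finrank_sup_add_finrank_inf_eq V W).symm
    _ ≤ Module.finrank ℚ (α → ℚ) + Module.finrank ℚ ↥(V ⊓ W) := by
      gcongr
      exact Submodule.finrank_le _
    _ = Nat.card α + Nat.card (Quotient (r ⊔ s)) := by
      rw [classFunctions_inf_classFunctions, finrank_classFunctions,
        Module.finrank_fintype_fun_eq_card, Nat.card_eq_fintype_card (α := α)]

end Partitions

section Permutations

variable {α : Type*}

theorem sameCycle_setoid_le_iff {σ : Perm α} {r : Setoid α} :
    SameCycle.setoid σ ≤ r ↔ ∀ x, r x (σ x) := by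
  constructor
  · intro h x
    exact h SameCycle.rfl.apply_right
  · rintro h x _ ⟨i, rfl⟩
    induction i with
    | zero => exact r.refl x
    | succ i ih =>
      rw [add_comm, zpow_one_add]
      exact r.trans ih (h _)
    | pred i ih =>
      refine r.trans ih (r.symm ?_)
      simpa only [← Perm.mul_apply, ← zpow_one_add, add_sub_cancel]
        using h ((σ ^ (-(i : ℤ) - 1)) x)

theorem sameCycle_setoid_mul_le (σ τ : Perm α) :
    SameCycle.setoid (σ * τ) ≤ SameCycle.setoid σ ⊔ SameCycle.setoid τ := by
  have hσ := sameCycle_setoid_le_iff.1 (le_sup_left : _ ≤ SameCycle.setoid σ ⊔ SameCycle.setoid τ)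
  have hτ := sameCycle_setoid_le_iff.1 (le_sup_right : _ ≤ SameCycle.setoid σ ⊔ SameCycle.setoid τ)
  exact sameCycle_setoid_le_iff.2 fun x => Setoid.trans' _ (hτ x) (hσ (τ x))

theorem card_cycles {k : ℕ} (σ : Perm (Fin k)) :
    (cycles σ).card = Nat.card (Quotient (SameCycle.setoid σ)) := by
  let cycle (x : Fin k) : Finset (Fin k) := Finset.univ.filter fun y => σ.SameCycle x y
  have mem_cycle {x y : Fin k} : y ∈ cycle x ↔ σ.SameCycle x y := Finset.mem_filter_univ y
  have ker_cycle : Setoid.ker cycle = SameCycle.setoid σ := by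
    ext x y
    constructor
    · intro hxy
      exact mem_cycle.1 (Setoid.ker_def.1 hxy ▸ mem_cycle.2 SameCycle.rfl)
    · intro hxy
      exact Finset.filter_congr fun _ _ => ⟨hxy.symm.trans, hxy.trans⟩
  have range_cycle : Set.range cycle = cycles σ := by
    rw [cycles, Finset.coe_image, Finset.coe_univ, Set.image_univ]
  rw [← ker_cycle, Nat.card_congr (Setoid.quotientKerEquivRange cycle), range_cycle,
    Nat.card_coe_set_eq, Set.ncard_coe_finset]

theorem sameCycle_finRotate_s11 {k : ℕ} (i j : Fin k) : (finRotate k).SameCycle i j := by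
  obtain hk | hk := lt_or_ge k 2
  · have : Subsingleton (Fin k) := Fin.subsingleton_iff_le_one.2 (by lia)
    exact (Subsingleton.elim i j).sameCycle _
  · have hmoves (i : Fin k) : finRotate k i ≠ i := by
      rw [← mem_support, support_finRotate_of_le hk]
      exact Finset.mem_univ i
    exact (isCycle_finRotate_of_le hk).sameCycle (hmoves i) (hmoves j)

theorem card_quotient_sameCycle_finRotate_le_one (k : ℕ) :
    Nat.card (Quotient (SameCycle.setoid (finRotate k))) ≤ 1 := by
  rw [Finite.card_le_one_iff_subsingleton]
  exact Quotient.subsingleton_iff.2 (top_le_iff.1 fun i j _ => sameCycle_finRotate_s11 i j)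

theorem stmt_11_general [Finite α] (σ τ : Perm α) :
    Nat.card (Quotient (SameCycle.setoid σ)) + Nat.card (Quotient (SameCycle.setoid τ)) ≤
      Nat.card α + Nat.card (Quotient (SameCycle.setoid (σ * τ))) :=
  (card_quotient_add_card_quotient_le _ _).trans
    (Nat.add_le_add_left (card_quotient_le_of_le (sameCycle_setoid_mul_le σ τ)) _)

end Permutations

/-- if `σ₁ σ₂ = (1,2,…,k)` then `|C(σ₁)| + |C(σ₂)| ≤ k + 1`. -/
theorem stmt_11 (k : ℕ) (hk : 1 ≤ k) (σ₁ σ₂ : Equiv.Perm (Fin k))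
    (hfact : σ₁ * σ₂ = finRotate k) :
    (cycles σ₁).card + (cycles σ₂).card ≤ k + 1 := by
  grw [card_cycles, card_cycles, stmt_11_general, hfact, card_quotient_sameCycle_finRotate_le_one,
    Nat.card_fin]
end

section
/- Let 𝕐 be the set of generalized Young diagrams, and for each integer k ≥ 2 let S_k : 𝕐 → ℝ be the fundamental functional of shape. Let F : 𝕐 → ℝ belong to the ℝ-subalgebra of functions 𝕐 → ℝ generated by the functionals {S_k : k ≥ 2}. Then for every m ≥ 1 there exists a polynomial W with real coefficients in 2m variables such that for all nonnegative reals p_1,…,p_m and all reals q_1 ≥ q_2 ≥ ⋯ ≥ q_m ≥ 0, F(p × q) = W(p_1,…,p_m,q_1,…,q_m), where p × q ∈ 𝕐 is the multirectangular generalized Young diagram defined by (p × q)(x) = Σ_{j : x < q_j} p_j. -/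
open MeasureTheory

/-- A generalized Young diagram in the French convention: a function `f : ℝ → ℝ` which is
nonnegative, non-increasing on `[0,∞)`, and has compact support there (the values on
`(-∞,0)` are irrelevant; boundedness on `[0,∞)` follows from monotonicity). -/
def GYD : Type :=
  {f : ℝ → ℝ // (∀ x, 0 ≤ f x) ∧ (∀ x y, 0 ≤ x → x ≤ y → f y ≤ f x) ∧
    ∃ M, ∀ x, M ≤ x → f x = 0}

/-- The fundamental functional of shape
`S_k(f) = (k−1) ∬_{{(x,y) : x ≥ 0, 0 ≤ y ≤ f(x)}} (x−y)^{k−2} dx dy`. -/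
noncomputable def Sfun (k : ℕ) : GYD → ℝ := fun f =>
  ((k : ℝ) - 1) *
    ∫ z in {z : ℝ × ℝ | 0 ≤ z.1 ∧ 0 ≤ z.2 ∧ z.2 ≤ f.1 z.1},
      (z.1 - z.2) ^ (k - 2) ∂(volume : Measure (ℝ × ℝ))

/-!
Integrating out `y` gives `S_k(f) = ∫_{x > 0} (x^{k-1} - (x - f(x))^{k-1}) dx`. For a
multirectangular diagram and a fixed `x`, the blocks with `x < q_j` form an initial segment, so the
integrand telescopes over the partial sums of `p`; the `j`-th difference lives on `[0, q_j)`, where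
it is a polynomial in `x` and in these partial sums. The functionals that are given by polynomials
on multirectangular diagrams form a subalgebra.
-/

open Finset in
theorem sum_sub_partialSum_of_isLowerSet {ι M A : Type*} [LinearOrder ι] [LocallyFiniteOrderBot ι]
    [AddCommMonoid M] [AddCommGroup A] (p : ι → M) (G : M → A) {s : Finset ι}
    (hs : IsLowerSet (s : Set ι)) :
    ∑ j ∈ s, (G (∑ i ∈ Iic j, p i) - G (∑ i ∈ Iio j, p i)) = G (∑ i ∈ s, p i) - G 0 := by
  induction s using Finset.induction_on_max with
  | empty => simp
  | insert a s hlt ih =>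
    have ha : a ∉ s := fun h => (hlt a h).false
    have hIic : Iic a = insert a s := by
      ext i
      refine ⟨fun hi => hs (mem_Iic.1 hi) (mem_insert_self a s), fun hi => mem_Iic.2 ?_⟩
      rcases mem_insert.1 hi with rfl | hi
      exacts [le_rfl, (hlt i hi).le]
    have hIio : Iio a = s := by rw [← Iic_erase, hIic, erase_insert ha]
    have hs' : IsLowerSet (s : Set ι) := by
      rw [← hIio, coe_Iio]
      exact isLowerSet_Iio a
    rw [sum_insert ha, ih hs', hIic, hIio, sub_add_sub_cancel]

theorem integral_pow_sub_left (n : ℕ) (x b : ℝ) :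
    ∫ y in 0..b, (x - y) ^ n = (x ^ (n + 1) - (x - b) ^ (n + 1)) / (n + 1) := by
  rw [intervalIntegral.integral_comp_sub_left (fun t => t ^ n), integral_pow, sub_zero]

theorem integral_pow_sub_right (n : ℕ) (c b : ℝ) :
    ∫ x in 0..b, (x - c) ^ n = ((b - c) ^ (n + 1) - (-c) ^ (n + 1)) / (n + 1) := by
  rw [intervalIntegral.integral_comp_sub_right (fun t => t ^ n), integral_pow, zero_sub]

namespace GYD

/-- The region between the positive half-axis and the graph of a diagram, over which the
fundamental functionals of shape integrate. -/
def region (f : GYD) : Set (ℝ × ℝ) :=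
  {z | 0 ≤ z.1 ∧ 0 ≤ z.2 ∧ z.2 ≤ f.1 z.1}

theorem measurableSet_region (f : GYD) : MeasurableSet f.region := by
  have hanti : Antitone fun x => f.1 (max x 0) := fun x y hxy =>
    f.2.2.1 _ _ (le_max_right x 0) (max_le_max_right 0 hxy)
  have hregion : f.region = {z | 0 ≤ z.1 ∧ 0 ≤ z.2 ∧ z.2 ≤ f.1 (max z.1 0)} := by
    ext z
    exact and_congr_right fun hz => by rw [max_eq_left hz]
  rw [hregion]
  exact (measurableSet_le measurable_const measurable_fst).inter
    ((measurableSet_le measurable_const measurable_snd).inter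
      (measurableSet_le measurable_snd (hanti.measurable.comp measurable_fst)))

theorem integrableOn_region_of_continuous {E : Type*} [NormedAddCommGroup E] (f : GYD)
    {g : ℝ × ℝ → E} (hg : Continuous g) : IntegrableOn g f.region := by
  obtain ⟨M, hM⟩ := f.2.2.2
  have hbox : IntegrableOn g (Set.Icc 0 M ×ˢ Set.Icc 0 (f.1 0)) :=
    hg.continuousOn.integrableOn_compact (isCompact_Icc.prod isCompact_Icc)
  -- Beyond the support of `f`, the region still contains a half-line of the axis `y = 0`.
  have haxis : IntegrableOn g (Set.univ ×ˢ {(0 : ℝ)}) :=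
    IntegrableOn.of_measure_zero <| by
      rw [Measure.volume_eq_prod, Measure.prod_prod, Real.volume_singleton, mul_zero]
  refine (hbox.union haxis).mono_set fun z ⟨hx, hy, hyf⟩ => ?_
  rcases le_total z.1 M with hxM | hMx
  · exact Or.inl ⟨⟨hx, hxM⟩, hy, hyf.trans (f.2.2.1 0 z.1 le_rfl hx)⟩
  · exact Or.inr ⟨Set.mem_univ _, le_antisymm (hyf.trans_eq (hM z.1 hMx)) hy⟩

theorem setIntegral_region {E : Type*} [NormedAddCommGroup E] [NormedSpace ℝ E] (f : GYD)
    {g : ℝ × ℝ → E} (hg : IntegrableOn g f.region) :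
    ∫ z in f.region, g z = ∫ x in Set.Ioi 0, ∫ y in 0..f.1 x, g (x, y) := by
  have hslice (x : ℝ) : ∫ y, f.region.indicator g (x, y) =
      (Set.Ici 0).indicator (fun x => ∫ y in 0..f.1 x, g (x, y)) x := by
    by_cases hx : 0 ≤ x
    · have hind (y : ℝ) : f.region.indicator g (x, y) =
          (Set.Icc 0 (f.1 x)).indicator (fun y => g (x, y)) y := by
        simp only [Set.indicator_apply, region, Set.mem_ofPred_eq, Set.mem_Icc, hx, true_and]
      simp_rw [hind]
      rw [integral_indicator measurableSet_Icc, integral_Icc_eq_integral_Ioc,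
        ← intervalIntegral.integral_of_le (f.2.1 x), Set.indicator_of_mem (Set.mem_Ici.2 hx)]
    · have hind (y : ℝ) : f.region.indicator g (x, y) = 0 :=
        Set.indicator_of_notMem (fun hz => hx hz.1) g
      simp_rw [hind]
      rw [integral_zero, Set.indicator_of_notMem (mt Set.mem_Ici.1 hx)]
  have hint : Integrable (f.region.indicator g) (volume.prod volume) :=
    hg.integrable_indicator f.measurableSet_region
  rw [← integral_indicator f.measurableSet_region, Measure.volume_eq_prod, integral_prod _ hint]
  simp_rw [hslice]
  rw [integral_indicator measurableSet_Ici, integral_Ici_eq_integral_Ioi]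

theorem Sfun_eq_integral_pow_sub {k : ℕ} (hk : 2 ≤ k) (f : GYD) :
    Sfun k f = ∫ x in Set.Ioi 0, (x ^ (k - 1) - (x - f.1 x) ^ (k - 1)) := by
  obtain ⟨n, rfl⟩ := Nat.exists_eq_add_of_le' hk
  have hcont : Continuous fun z : ℝ × ℝ => (z.1 - z.2) ^ n := by fun_prop
  calc Sfun (n + 2) f
      = (n + 1) * ∫ z in f.region, (z.1 - z.2) ^ n := by
        simp only [Sfun, region, Nat.add_sub_cancel]
        push_cast
        ring
    _ = (n + 1) * ∫ x in Set.Ioi 0, (x ^ (n + 1) - (x - f.1 x) ^ (n + 1)) / (n + 1) := by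
        rw [setIntegral_region f (integrableOn_region_of_continuous f hcont)]
        simp only [integral_pow_sub_left]
    _ = ∫ x in Set.Ioi 0, (x ^ (n + 1) - (x - f.1 x) ^ (n + 1)) := by
        rw [integral_div, mul_div_cancel₀ _ (by positivity)]

end GYD

/-- `f` is the multirectangular diagram `p × q`. The entries of `p` may be negative as long as the
sums in `apply_eq` form a diagram; the values of `f` at negative arguments are arbitrary. -/
structure IsMultirectangular {ι : Type*} [Fintype ι] [Preorder ι] (p q : ι → ℝ) (f : GYD) :
    Prop where
  antitone : Antitone q
  nonneg : ∀ j, 0 ≤ q j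
  apply_eq : ∀ x, 0 ≤ x → f.1 x = ∑ j, if x < q j then p j else 0

namespace IsMultirectangular

open Finset

variable {ι : Type*} [Fintype ι] [LinearOrder ι] [LocallyFiniteOrderBot ι] {p q : ι → ℝ} {f : GYD}

theorem comp_sub_comp_zero {A : Type*} [AddCommGroup A] (h : IsMultirectangular p q f)
    (G : ℝ → A) {x : ℝ} (hx : 0 ≤ x) :
    G (f.1 x) - G 0 =
      ∑ j, if x < q j then G (∑ i ∈ Iic j, p i) - G (∑ i ∈ Iio j, p i) else 0 := by
  have hlower : IsLowerSet (({j | x < q j} : Finset ι) : Set ι) := fun i j hji hi => by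
    simp only [coe_filter, mem_univ, true_and, Set.mem_ofPred_eq] at hi ⊢
    exact hi.trans_le (h.antitone hji)
  rw [h.apply_eq x hx, ← sum_filter, ← sum_filter, sum_sub_partialSum_of_isLowerSet p G hlower]

theorem integral_comp_sub_comp_zero {E : Type*} [NormedAddCommGroup E] [NormedSpace ℝ E]
    (h : IsMultirectangular p q f) {G : ℝ → ℝ → E} (hG : ∀ c, Continuous fun x => G x c) :
    ∫ x in Set.Ioi 0, (G x (f.1 x) - G x 0) =
      ∑ j, ∫ x in 0..q j, (G x (∑ i ∈ Iic j, p i) - G x (∑ i ∈ Iio j, p i)) := by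
  set D : ι → ℝ → E := fun j x => G x (∑ i ∈ Iic j, p i) - G x (∑ i ∈ Iio j, p i)
  have hD (j : ι) : Continuous (D j) := (hG _).sub (hG _)
  have hint (j : ι) : IntegrableOn ((Set.Iio (q j)).indicator (D j)) (Set.Ioi 0) := by
    rw [IntegrableOn, integrable_indicator_iff measurableSet_Iio, IntegrableOn,
      Measure.restrict_restrict measurableSet_Iio, Set.Iio_inter_Ioi]
    exact (hD j).integrableOn_Icc.mono_set Set.Ioo_subset_Icc_self
  calc ∫ x in Set.Ioi 0, (G x (f.1 x) - G x 0)
      = ∫ x in Set.Ioi 0, ∑ j, (Set.Iio (q j)).indicator (D j) x :=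
        setIntegral_congr_fun measurableSet_Ioi fun x hx => h.comp_sub_comp_zero (G x) hx.le
    _ = ∑ j, ∫ x in Set.Ioi 0, (Set.Iio (q j)).indicator (D j) x :=
        integral_finsetSum _ fun j _ => hint j
    _ = ∑ j, ∫ x in 0..q j, D j x := sum_congr rfl fun j _ => by
        rw [integral_indicator measurableSet_Iio, Measure.restrict_restrict measurableSet_Iio,
          Set.Iio_inter_Ioi, ← integral_Ioc_eq_integral_Ioo,
          intervalIntegral.integral_of_le (h.nonneg j)]

theorem Sfun_eq {k : ℕ} (hk : 2 ≤ k) (h : IsMultirectangular p q f) :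
    Sfun k f = (k : ℝ)⁻¹ * ∑ j,
      ((q j - ∑ i ∈ Iio j, p i) ^ k - (-∑ i ∈ Iio j, p i) ^ k
        - (q j - ∑ i ∈ Iic j, p i) ^ k + (-∑ i ∈ Iic j, p i) ^ k) := by
  obtain ⟨n, rfl⟩ := Nat.exists_eq_add_of_le' (one_le_two.trans hk)
  have hblock (a b c : ℝ) : ∫ x in 0..c, (-(x - b) ^ n - -(x - a) ^ n) =
      ((n + 1 : ℕ) : ℝ)⁻¹ *
        ((c - a) ^ (n + 1) - (-a) ^ (n + 1) - (c - b) ^ (n + 1) + (-b) ^ (n + 1)) := by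
    simp only [neg_sub_neg]
    rw [intervalIntegral.integral_sub (Continuous.intervalIntegrable (by fun_prop) _ _)
      (Continuous.intervalIntegrable (by fun_prop) _ _), integral_pow_sub_right,
      integral_pow_sub_right]
    push_cast
    ring
  calc Sfun (n + 1) f
      = ∫ x in Set.Ioi 0, (-(x - f.1 x) ^ n - -(x - 0) ^ n) := by
        rw [GYD.Sfun_eq_integral_pow_sub hk]
        simp only [Nat.add_sub_cancel, sub_zero, neg_sub_neg]
    _ = ∑ j, ∫ x in 0..q j, (-(x - ∑ i ∈ Iic j, p i) ^ n - -(x - ∑ i ∈ Iio j, p i) ^ n) :=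
        h.integral_comp_sub_comp_zero (G := fun x c => -(x - c) ^ n) fun c => by fun_prop
    _ = _ := by simp only [hblock, mul_sum]

end IsMultirectangular

open MvPolynomial in
/-- The Stanley polynomial of `Sfun k`. The variables `Sum.inl i` and `Sum.inr i` stand for `p i`
and `q i`. -/
noncomputable def stanleyPolynomial (ι : Type*) [Fintype ι] [Preorder ι] [LocallyFiniteOrderBot ι]
    (k : ℕ) : MvPolynomial (ι ⊕ ι) ℝ :=
  C (k : ℝ)⁻¹ * ∑ j,
    ((X (Sum.inr j) - ∑ i ∈ Finset.Iio j, X (Sum.inl i)) ^ k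
      - (-∑ i ∈ Finset.Iio j, X (Sum.inl i)) ^ k
      - (X (Sum.inr j) - ∑ i ∈ Finset.Iic j, X (Sum.inl i)) ^ k
      + (-∑ i ∈ Finset.Iic j, X (Sum.inl i)) ^ k)

theorem IsMultirectangular.Sfun_eq_eval_stanleyPolynomial {ι : Type*} [Fintype ι] [LinearOrder ι]
    [LocallyFiniteOrderBot ι] {p q : ι → ℝ} {f : GYD} {k : ℕ} (hk : 2 ≤ k)
    (h : IsMultirectangular p q f) :
    Sfun k f = MvPolynomial.eval (Sum.elim p q) (stanleyPolynomial ι k) := by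
  simp only [h.Sfun_eq hk, stanleyPolynomial, map_mul, map_sum, map_add, map_sub, map_pow, map_neg,
    MvPolynomial.eval_C, MvPolynomial.eval_X, Sum.elim_inl, Sum.elim_inr]

/-- The functionals on diagrams that are given by one polynomial in `p` and `q` on all
multirectangular diagrams `p × q` with blocks indexed by `ι`. -/
def stanleySubalgebra (ι : Type*) [Fintype ι] [Preorder ι] : Subalgebra ℝ (GYD → ℝ) where
  carrier := {F | ∃ W : MvPolynomial (ι ⊕ ι) ℝ, ∀ p q f,
    IsMultirectangular p q f → F f = MvPolynomial.eval (Sum.elim p q) W}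
  algebraMap_mem' r := ⟨MvPolynomial.C r, fun _ _ _ _ => (MvPolynomial.eval_C r).symm⟩
  add_mem' := fun ⟨U, hU⟩ ⟨V, hV⟩ => ⟨U + V, fun p q f h => by
    rw [map_add, ← hU p q f h, ← hV p q f h, Pi.add_apply]⟩
  mul_mem' := fun ⟨U, hU⟩ ⟨V, hV⟩ => ⟨U * V, fun p q f h => by
    rw [map_mul, ← hU p q f h, ← hV p q f h, Pi.mul_apply]⟩

theorem stmt_14_general (ι : Type*) [Fintype ι] [LinearOrder ι] [LocallyFiniteOrderBot ι] :
    Algebra.adjoin ℝ {g : GYD → ℝ | ∃ k, 2 ≤ k ∧ g = Sfun k} ≤ stanleySubalgebra ι := by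
  rw [Algebra.adjoin_le_iff]
  rintro _ ⟨k, hk, rfl⟩
  exact ⟨stanleyPolynomial ι k, fun _ _ _ h => h.Sfun_eq_eval_stanleyPolynomial hk⟩

/-- any `F : 𝕐 → ℝ` in the ℝ-subalgebra of functions generated by the
fundamental functionals `{S_k : k ≥ 2}` admits, for every `m ≥ 1`, a Stanley polynomial `W`
in `2m` variables such that `F(p × q) = W(p_1,…,p_m,q_1,…,q_m)` for all `p_i ≥ 0` and
`q_1 ≥ ⋯ ≥ q_m ≥ 0`, where `p × q` is the multirectangular generalized Young diagram
`(p × q)(x) = Σ_{j : x < q_j} p_j`. -/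
theorem stmt_14 (F : GYD → ℝ)
    (hF : F ∈ Algebra.adjoin ℝ {g : GYD → ℝ | ∃ k, 2 ≤ k ∧ g = Sfun k})
    (m : ℕ) (hm : 1 ≤ m) :
    ∃ W : MvPolynomial (Fin m ⊕ Fin m) ℝ,
      ∀ (p q : Fin m → ℝ), (∀ i, 0 ≤ p i) → (∀ i j, i ≤ j → q j ≤ q i) →
        (∀ i, 0 ≤ q i) →
        ∀ f : GYD, (∀ x, 0 ≤ x → f.1 x = ∑ j : Fin m, if x < q j then p j else 0) →
          F f = MvPolynomial.eval (Sum.elim p q) W := by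
  obtain ⟨W, hW⟩ := stmt_14_general (Fin m) hF
  exact ⟨W, fun p q _ hq hq0 f hf => hW p q f ⟨hq, hq0, hf⟩⟩
end
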